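/- (Cartier) Let k be a field of characteristic 0 and let H be a commutative Hopf algebra over k. Then H is semiprime, i.e., H is a reduced ring (it has no nonzero nilpotent elements). -/

import Mathlib

universe u v

/-!
In characteristic zero every derivation `A → A` preserves the nilradical `N`. Hence, if `Ω[A⁄k]` is
projective, `d N ⊆ N • Ω[A⁄k]`. For a maximal ideal `I`, smoothness of `A ⧸ I` over `k` yields an
`A`-linear map `e : Ω[A⁄k] → I` for which `E = e ∘ d` is an Euler derivation: `E x ≡ n x` modulo
`I ^ (n + 1)` for `x ∈ I ^ n`. If `N ⊆ I ^ n` then `E N ⊆ N • I ⊆ I ^ (n + 1)`, so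
`N ⊆ I ^ (n + 1)`. By Krull's intersection theorem `N = 0` as soon as `A` is Noetherian.

For a commutative Hopf algebra, `Ω[H⁄k]` is a direct summand of the free module `H ⊗ Ω[H⁄k]`, since
`da = ∑ a₁ • ω(a₂)` for the invariant form `ω(a) = ∑ S(a₁) • da₂`. Finally, each element of `H` lies
in a Hopf subalgebra of finite type: the matrix coefficients of a finite-dimensional comodule,
together with their antipodes, generate one.
-/

open TensorProduct KaehlerDifferential Coalgebra HopfAlgebra

section Derivation

variable {R A : Type*} [CommRing R] [CommRing A] [Algebra R A]

theorem derivation_pow_add_two_mul_eq_zero [IsAddTorsionFree A] (D : Derivation R A A) {x : A}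
    {m j : ℕ} (h : x ^ m * D x ^ j = 0) : D x ^ (j + 2 * m) = 0 := by
  induction m generalizing j with
  | zero => simpa using h
  | succ m ih =>
    -- Differentiating `x ^ (m + 1) * D x ^ (j + 1)` trades one factor `x` for two factors `D x`.
    have hD : D (x ^ (m + 1) * D x ^ (j + 1)) = 0 := by
      rw [pow_succ (D x), ← mul_assoc, h, zero_mul, map_zero]
    have hx : (m + 1) • (x ^ m * D x ^ (j + 2)) = 0 := by
      simp only [Derivation.leibniz, Derivation.leibniz_pow, smul_eq_mul, nsmul_eq_mul,
        Nat.add_sub_cancel] at hD ⊢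
      linear_combination hD - ((j + 1 : ℕ) : A) * D (D x) * h
    rw [← ih ((nsmul_eq_zero_iff_right m.succ_ne_zero).1 hx), Nat.mul_succ, add_right_comm,
      add_assoc]

theorem isNilpotent_derivation_apply [IsAddTorsionFree A] (D : Derivation R A A) {x : A}
    (hx : IsNilpotent x) : IsNilpotent (D x) := by
  obtain ⟨n, hn⟩ := hx
  exact ⟨0 + 2 * n, derivation_pow_add_two_mul_eq_zero D (by simpa using hn)⟩

theorem mem_smul_top_of_forall_dual_mem {P : Type*} [AddCommGroup P] [Module A P]
    [Module.Projective A P] {I : Ideal A} {p : P} (h : ∀ f : Module.Dual A P, f p ∈ I) :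
    p ∈ I • (⊤ : Submodule A P) := by
  obtain ⟨s, hs⟩ := Module.projective_def'.1 ‹Module.Projective A P›
  rw [← LinearMap.id_apply (R := A) p, ← hs, LinearMap.comp_apply, Finsupp.linearCombination_apply]
  exact sum_mem fun q _ ↦ Submodule.smul_mem_smul (h (Finsupp.lapply q ∘ₗ s)) trivial

theorem derivation_mem_nilradical_smul_top [IsAddTorsionFree A] {P : Type*} [AddCommGroup P]
    [Module R P] [Module A P] [IsScalarTower R A P] [Module.Projective A P] (D : Derivation R A P)
    {x : A} (hx : IsNilpotent x) : D x ∈ nilradical A • (⊤ : Submodule A P) :=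
  mem_smul_top_of_forall_dual_mem fun f ↦ isNilpotent_derivation_apply (f.compDer D) hx

theorem derivation_sub_nsmul_mem_pow_succ {I : Ideal A} (E : Derivation R A A)
    (hE : ∀ a ∈ I, E a - a ∈ I ^ 2) (n : ℕ) {x : A} (hx : x ∈ I ^ (n + 1)) :
    E x - (n + 1) • x ∈ I ^ (n + 2) := by
  induction n generalizing x with
  | zero => simpa using hE x (by simpa using hx)
  | succ n ih =>
    rw [pow_succ] at hx
    induction hx using Submodule.mul_induction_on' with
    | mem_mul_mem y hy a ha =>
      have hyE : y * (E a - a) ∈ I ^ (n + 1 + 2) := by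
        simpa only [← pow_add] using Ideal.mul_mem_mul hy (hE a ha)
      have hEy : (E y - (n + 1) • y) * a ∈ I ^ (n + 1 + 2) := by
        simpa only [← pow_succ] using Ideal.mul_mem_mul (ih hy) ha
      convert! add_mem hyE hEy using 1
      simp only [Derivation.leibniz, smul_eq_mul, nsmul_eq_mul]
      push_cast
      ring
    | add y _ z _ hy hz =>
      convert! add_mem hy hz using 1
      rw [map_add]
      module

/-- Smoothness of `S` splits `I / I ^ 2 → S ⊗ Ω[A⁄R]`; projectivity lifts the retraction to `I`. -/
theorem exists_linearMap_kaehlerDifferential_sub_mem_sq [Module.Projective A Ω[A⁄R]]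
    {S : Type*} [CommRing S] [Algebra R S] [Algebra A S] [IsScalarTower R A S]
    [Algebra.FormallySmooth R S] (hS : Function.Surjective (algebraMap A S)) :
    ∃ e : Ω[A⁄R] →ₗ[A] RingHom.ker (algebraMap A S),
      ∀ a ∈ RingHom.ker (algebraMap A S),
        (e (D R A a) : A) - a ∈ RingHom.ker (algebraMap A S) ^ 2 := by
  set I := RingHom.ker (algebraMap A S)
  let π : A ⧸ I ^ 2 →ₐ[R] S := (IsScalarTower.toAlgHom R A S).kerSquareLift
  have hπ : Function.Surjective π := fun s ↦ (hS s).imp' (Ideal.Quotient.mk _) fun a ha ↦ ha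
  have hker : RingHom.ker π.toRingHom ^ 2 = ⊥ :=
    (congrArg (· ^ 2) (AlgHom.ker_kerSquareLift _)).trans (Ideal.cotangentIdeal_square _)
  obtain ⟨l, hl⟩ := (retractionKerCotangentToTensorEquivSection hS).symm
    ⟨_, Algebra.FormallySmooth.comp_liftOfSurjective (AlgHom.id R S) π hπ ⟨2, hker⟩⟩
  obtain ⟨e, he⟩ := Module.projective_lifting_property I.toCotangent
    (l ∘ₗ TensorProduct.mk A S Ω[A⁄R] 1) I.toCotangent_surjective
  refine ⟨e, fun a ha ↦ (Ideal.toCotangent_eq I (y := ⟨a, ha⟩)).1 ?_⟩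
  rw [← LinearMap.comp_apply, he, LinearMap.comp_apply]
  exact LinearMap.congr_fun hl (I.toCotangent ⟨a, ha⟩)

end Derivation

section Reduced

variable (R : Type*) {A : Type*} [CommRing R] [CommRing A] [Algebra R A]

theorem nilradical_le_ker_algebraMap_pow [Algebra ℚ A] [Module.Projective A Ω[A⁄R]]
    {S : Type*} [CommRing S] [IsReduced S] [Algebra R S] [Algebra A S] [IsScalarTower R A S]
    [Algebra.FormallySmooth R S] (hS : Function.Surjective (algebraMap A S)) (n : ℕ) :
    nilradical A ≤ RingHom.ker (algebraMap A S) ^ n := by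
  have : IsAddTorsionFree A := .of_module_rat A
  set I := RingHom.ker (algebraMap A S)
  have hI : nilradical A ≤ I := fun x hx ↦
    RingHom.mem_ker.2 (IsNilpotent.map hx (algebraMap A S)).eq_zero
  obtain ⟨e, he⟩ := exists_linearMap_kaehlerDifferential_sub_mem_sq (R := R) hS
  induction n with
  | zero => simp
  | succ n ih =>
    cases n with
    | zero => simpa using hI
    | succ n =>
      intro x hx
      let E : Derivation R A A := (I.subtype ∘ₗ e).compDer (D R A)
      have hEx : E x ∈ I ^ (n + 2) := by
        have h := Submodule.mem_map_of_mem (f := I.subtype ∘ₗ e)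
          (derivation_mem_nilradical_smul_top (D R A) hx)
        rw [Submodule.map_smul''] at h
        rw [pow_succ]
        refine Submodule.smul_mono ih ?_ h
        rintro _ ⟨ω, -, rfl⟩
        exact (e ω).2
      have hnx : (n + 1) • x ∈ I ^ (n + 2) := by
        simpa using sub_mem hEx (derivation_sub_nsmul_mem_pow_succ E he n (ih hx))
      have h := (I ^ (n + 2)).smul_mem (algebraMap ℚ A (n + 1)⁻¹) hnx
      rwa [nsmul_eq_mul, smul_eq_mul, ← mul_assoc, ← map_natCast (algebraMap ℚ A), ← map_mul,
        Nat.cast_succ, inv_mul_cancel₀ n.cast_add_one_ne_zero, map_one, one_mul] at h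

theorem isReduced_of_projective_kaehlerDifferential (k A : Type*) [Field k] [CharZero k]
    [CommRing A] [Algebra k A] [Algebra.EssFiniteType k A] [Module.Projective A Ω[A⁄k]] :
    IsReduced A := by
  let : Algebra ℚ A := ((algebraMap k A).comp (algebraMap ℚ k)).toAlgebra
  have : IsNoetherianRing A := Algebra.EssFiniteType.isNoetherianRing k A
  refine ⟨fun x hx ↦ ?_⟩
  by_contra hx0
  obtain ⟨M, hM, hxM⟩ := Ideal.exists_le_maximal (Ideal.torsionOf A A x)
    (mt (Ideal.torsionOf_eq_top_iff A x).1 hx0)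
  let := Ideal.Quotient.field M
  have hxM' : x ∈ ⨅ n : ℕ, M ^ n • (⊤ : Ideal A) := by
    simp only [Submodule.mem_iInf, smul_eq_mul, Ideal.mul_top]
    intro n
    simpa using nilradical_le_ker_algebraMap_pow k (S := A ⧸ M) Ideal.Quotient.mk_surjective n hx
  obtain ⟨r, hr⟩ := (Ideal.mem_iInf_smul_pow_eq_bot_iff M x).1 hxM'
  have h1r : 1 - (r : A) ∈ M := hxM (by
    rw [Ideal.mem_torsionOf_iff, sub_smul, one_smul, sub_eq_zero]
    exact hr.symm)
  exact hM.ne_top ((Ideal.eq_top_iff_one M).2 (by simpa using add_mem h1r r.2))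

end Reduced

section Sums

variable {R : Type*} [CommSemiring R]

theorem sum_counit_right_smul {C : Type*} [AddCommMonoid C] [Module R C] [Coalgebra R C] {a : C}
    {ι : Type*} (r : Coalgebra.Repr R a ι) :
    ∑ i ∈ r.index, counit (R := R) (r.right i) • r.left i = a := by
  simpa only [map_sum, TensorProduct.rid_tmul, one_smul]
    using congr(TensorProduct.rid R C $(sum_tmul_counit_eq r))

theorem sum_repr_mul {H : Type*} [CommSemiring H] [Bialgebra R H] {M : Type*} [AddCommMonoid M]
    {a b : H} {ι κ : Type*} (r : Coalgebra.Repr R a ι) (s : Coalgebra.Repr R b κ)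
    (f : H → H → M) :
    ∑ i ∈ (r.mul s).index, f ((r.mul s).left i) ((r.mul s).right i) =
      ∑ i ∈ r.index, ∑ j ∈ s.index, f (r.left i * s.left j) (r.right i * s.right j) :=
  Finset.sum_product _ _ _

end Sums

section InvariantForm

variable (R H : Type*) [CommRing R] [CommRing H] [HopfAlgebra R H]

/-- The left-invariant differential form `ω(a) = ∑ S(a₁) • da₂` attached to `a ∈ H`. The invariant
forms span `Ω[H⁄R]` over `H`. -/
noncomputable def invariantForm : H →ₗ[R] Ω[H⁄R] :=
  TensorProduct.lift ((Algebra.lsmul R R Ω[H⁄R]).toLinearMap.compl₁₂ (antipode R)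
    (D R H).toLinearMap) ∘ₗ comul

variable {R H}

theorem invariantForm_eq_sum {a : H} {ι : Type*} (r : Coalgebra.Repr R a ι) :
    invariantForm R H a = ∑ i ∈ r.index, antipode R (r.left i) • D R H (r.right i) := by
  simp [invariantForm, ← r.eq]

theorem invariantForm_mul (a b : H) :
    invariantForm R H (a * b) =
      counit (R := R) a • invariantForm R H b + counit (R := R) b • invariantForm R H a := by
  let r := ℛ R a
  let s := ℛ R b
  calc invariantForm R H (a * b)
      = ∑ i ∈ r.index, ∑ j ∈ s.index,
          ((antipode R (r.left i) * r.right i) • antipode R (s.left j) • D R H (s.right j) +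
          (antipode R (s.left j) * s.right j) • antipode R (r.left i) • D R H (r.right i)) := by
        rw [invariantForm_eq_sum (r.mul s), sum_repr_mul r s fun x y ↦ antipode R x • D R H y]
        refine Finset.sum_congr rfl fun i _ ↦ Finset.sum_congr rfl fun j _ ↦ ?_
        rw [antipode_mul_distrib, Derivation.leibniz]
        module
    _ = (∑ i ∈ r.index, antipode R (r.left i) * r.right i) • invariantForm R H b +
          (∑ j ∈ s.index, antipode R (s.left j) * s.right j) • invariantForm R H a := by
        simp only [invariantForm_eq_sum r, invariantForm_eq_sum s, Finset.sum_add_distrib,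
          Finset.sum_smul, Finset.smul_sum]
        rw [Finset.sum_comm (s := s.index)]
    _ = _ := by
        rw [sum_antipode_mul_eq_algebraMap_counit, sum_antipode_mul_eq_algebraMap_counit,
          algebraMap_smul, algebraMap_smul]

theorem sum_smul_invariantForm {a : H} {ι : Type*} (r : Coalgebra.Repr R a ι) :
    ∑ i ∈ r.index, r.left i • invariantForm R H (r.right i) = D R H a := by
  let φ : H ⊗[R] (H ⊗[R] H) →ₗ[R] Ω[H⁄R] := TensorProduct.lift
    ((Algebra.lsmul R R Ω[H⁄R]).toLinearMap.compl₂ (TensorProduct.lift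
      ((Algebra.lsmul R R Ω[H⁄R]).toLinearMap.compl₁₂ (antipode R) (D R H).toLinearMap)))
  have hφ (x y z : H) : φ (x ⊗ₜ (y ⊗ₜ z)) = (x * antipode R y) • D R H z := by
    simp [φ, mul_smul]
  calc ∑ i ∈ r.index, r.left i • invariantForm R H (r.right i)
      = φ (∑ i ∈ r.index, ∑ j ∈ (ℛ R (r.right i)).index,
          r.left i ⊗ₜ[R] ((ℛ R (r.right i)).left j ⊗ₜ[R] (ℛ R (r.right i)).right j)) := by
        simp only [map_sum, hφ, invariantForm_eq_sum (ℛ R _), Finset.smul_sum, smul_smul]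
    _ = φ (∑ i ∈ r.index, ∑ j ∈ (ℛ R (r.left i)).index,
          (ℛ R (r.left i)).left j ⊗ₜ[R] ((ℛ R (r.left i)).right j ⊗ₜ[R] r.right i)) := by
        rw [sum_tmul_tmul_eq r (fun i ↦ ℛ R (r.left i))]
    _ = D R H (∑ i ∈ r.index, counit (R := R) (r.left i) • r.right i) := by
        simp only [map_sum, hφ, ← Finset.sum_smul, sum_mul_antipode_eq_algebraMap_counit,
          algebraMap_smul, Derivation.map_smul]
    _ = D R H a := by rw [sum_counit_smul]

theorem lTensor_invariantForm_comul {a : H} {ι : Type*} (r : Coalgebra.Repr R a ι) :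
    (invariantForm R H).lTensor H (comul a) =
      ∑ i ∈ r.index, r.left i ⊗ₜ[R] invariantForm R H (r.right i) := by
  simp [← r.eq]

theorem lTensor_invariantForm_comul_mul (a b : H) :
    (invariantForm R H).lTensor H (comul (a * b)) =
      a • (invariantForm R H).lTensor H (comul b) +
        b • (invariantForm R H).lTensor H (comul a) := by
  let r := ℛ R a
  let s := ℛ R b
  let ω := invariantForm R H
  calc ω.lTensor H (comul (a * b))
      = ∑ i ∈ r.index, ∑ j ∈ s.index,
          (((counit (R := R) (r.right i) • r.left i) * s.left j) ⊗ₜ[R] ω (s.right j) +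
          (r.left i * counit (R := R) (s.right j) • s.left j) ⊗ₜ[R] ω (r.right i)) := by
        rw [lTensor_invariantForm_comul (r.mul s), sum_repr_mul r s fun x y ↦ x ⊗ₜ[R] ω y]
        simp only [ω, invariantForm_mul, tmul_add, tmul_smul, smul_mul_assoc, mul_smul_comm,
          smul_tmul']
    _ = ∑ j ∈ s.index,
            ((∑ i ∈ r.index, counit (R := R) (r.right i) • r.left i) * s.left j) ⊗ₜ[R]
              ω (s.right j) +
          ∑ i ∈ r.index,
            (r.left i * ∑ j ∈ s.index, counit (R := R) (s.right j) • s.left j) ⊗ₜ[R]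
              ω (r.right i) := by
        simp only [Finset.sum_add_distrib, Finset.sum_mul, Finset.mul_sum, sum_tmul]
        rw [Finset.sum_comm (s := r.index)]
    _ = a • ω.lTensor H (comul b) + b • ω.lTensor H (comul a) := by
        rw [sum_counit_right_smul, sum_counit_right_smul, lTensor_invariantForm_comul r,
          lTensor_invariantForm_comul s]
        simp only [Finset.smul_sum, smul_tmul', smul_eq_mul, mul_comm b, ω]

variable (R H) in
/-- The derivation `a ↦ ∑ a₁ ⊗ ω(a₂)`, where `ω` is `invariantForm`. Its linearization
`Ω[H⁄R] → H ⊗ Ω[H⁄R]` is a section of the action map `a ⊗ η ↦ a • η`. -/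
noncomputable def translateDerivation : Derivation R H (H ⊗[R] Ω[H⁄R]) :=
  .mk' ((invariantForm R H).lTensor H ∘ₗ comul) lTensor_invariantForm_comul_mul

theorem projective_kaehlerDifferential_of_hopfAlgebra [Module.Projective R Ω[H⁄R]] :
    Module.Projective H Ω[H⁄R] := by
  refine .of_split (P := Ω[H⁄R]) (M := H ⊗[R] Ω[H⁄R])
    (translateDerivation R H).liftKaehlerDifferential (LinearMap.liftBaseChange H .id) ?_
  refine Derivation.liftKaehlerDifferential_unique _ _ ?_
  ext a
  simp [translateDerivation, lTensor_invariantForm_comul (ℛ R a), sum_smul_invariantForm]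

end InvariantForm

section Slice

variable {R M M' N N' : Type*} [CommRing R] [AddCommGroup M] [Module R M] [AddCommGroup M']
  [Module R M'] [AddCommGroup N] [Module R N] [AddCommGroup N'] [Module R N']

variable (M) in
/-- The slice map `id ⊗ f : M ⊗ N → M`, contracting the right tensor factor against `f`. -/
noncomputable def rightSlice (f : Module.Dual R N) : M ⊗[R] N →ₗ[R] M :=
  (TensorProduct.rid R M).toLinearMap ∘ₗ f.lTensor M

@[simp]
theorem rightSlice_tmul (f : Module.Dual R N) (m : M) (n : N) :
    rightSlice M f (m ⊗ₜ n) = f n • m := by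
  simp [rightSlice]

theorem comp_rightSlice (φ : M →ₗ[R] M') (f : Module.Dual R N) :
    φ ∘ₗ rightSlice M f = rightSlice M' f ∘ₗ φ.rTensor N := by
  ext; simp

theorem rightSlice_comp_lTensor (f : Module.Dual R N') (φ : N →ₗ[R] N') :
    rightSlice M f ∘ₗ φ.lTensor M = rightSlice M (f ∘ₗ φ) := by
  ext; simp

theorem rightSlice_comp_rightSlice (f : Module.Dual R N) (g : Module.Dual R N') :
    rightSlice M f ∘ₗ rightSlice (M ⊗[R] N) g =
      rightSlice M (LinearMap.mul' R R ∘ₗ TensorProduct.map f g) ∘ₗ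
        (TensorProduct.assoc R M N N').toLinearMap := by
  ext m n n'
  simp [smul_smul, mul_comm]

theorem mem_range_rTensor_of_forall_rightSlice_mem [Module.Free R N] {V : Submodule R M}
    {t : M ⊗[R] N} (h : ∀ f, rightSlice M f t ∈ V) :
    t ∈ LinearMap.range (V.subtype.rTensor N) := by
  let b := Module.Free.chooseBasis R N
  obtain ⟨m, rfl⟩ := TensorProduct.eq_repr_basis_right b t
  refine sum_mem fun i _ ↦ ?_
  have hmi : m i ∈ V := by
    simpa [Finsupp.sum, Finsupp.single_apply] using h (b.coord i)
  exact ⟨⟨m i, hmi⟩ ⊗ₜ b i, rfl⟩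

end Slice

section LocallyFinite

variable {R C : Type*} [CommRing R] [AddCommGroup C] [Module R C] [Coalgebra R C]

variable (R) in
/-- The right coideal of `C` generated by `x`, constructed as the span of all slices
`(id ⊗ f)(Δ x)`. For `C` free over `R` it is the smallest `V ∋ x` with `Δ(V) ⊆ V ⊗ C`. -/
noncomputable def generatedRightCoideal (x : C) : Submodule R C :=
  Submodule.span R (Set.range fun f : Module.Dual R C ↦ rightSlice C f (comul x))

theorem mem_generatedRightCoideal (x : C) : x ∈ generatedRightCoideal R x :=
  Submodule.subset_span ⟨counit, by simp [rightSlice]⟩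

instance finite_generatedRightCoideal [IsNoetherianRing R] (x : C) :
    Module.Finite R (generatedRightCoideal R x) := by
  let r := ℛ R x
  let V := Submodule.span R (r.left '' r.index)
  have : Module.Finite R V := .span_of_finite R (r.index.finite_toSet.image _)
  have hle : generatedRightCoideal R x ≤ V := by
    refine Submodule.span_le.2 ?_
    rintro _ ⟨f, rfl⟩
    simp only [← r.eq, map_sum, rightSlice_tmul]
    exact sum_mem fun i hi ↦ V.smul_mem _ (Submodule.subset_span ⟨i, hi, rfl⟩)
  exact Module.Finite.of_injective _ (Submodule.inclusion_injective hle)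

theorem rightSlice_comul_rightSlice_comul (f g : Module.Dual R C) (x : C) :
    rightSlice C g (comul (rightSlice C f (comul x))) =
      rightSlice C (LinearMap.mul' R R ∘ₗ TensorProduct.map g f ∘ₗ comul) (comul x) := by
  have h₁ := LinearMap.congr_fun (comp_rightSlice comul f) (comul x)
  have h₂ := LinearMap.congr_fun (rightSlice_comp_rightSlice (M := C) g f)
    (comul.rTensor C (comul x))
  have h₃ := LinearMap.congr_fun (rightSlice_comp_lTensor (M := C)
    (LinearMap.mul' R R ∘ₗ TensorProduct.map g f) comul) (comul x)
  simp only [LinearMap.comp_apply, LinearEquiv.coe_coe, coassoc_apply] at h₁ h₂ h₃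
  rw [h₁, h₂, h₃, LinearMap.comp_assoc]

theorem comul_mem_range_rTensor_generatedRightCoideal [Module.Free R C] {x y : C}
    (hy : y ∈ generatedRightCoideal R x) :
    comul y ∈ LinearMap.range ((generatedRightCoideal R x).subtype.rTensor C) := by
  refine mem_range_rTensor_of_forall_rightSlice_mem fun g ↦ ?_
  induction hy using Submodule.span_induction with
  | zero => simp
  | add y z _ _ hy hz => simpa using add_mem hy hz
  | smul c y _ hy => simpa using Submodule.smul_mem _ c hy
  | mem y hy =>
    obtain ⟨f, rfl⟩ := hy
    exact Submodule.subset_span ⟨_, (rightSlice_comul_rightSlice_comul f g x).symm⟩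

end LocallyFinite

section Antipode

variable {R H : Type*} [CommRing R] [CommRing H] [HopfAlgebra R H]

open WithConv

theorem antipode_antipode (a : H) : antipode R (antipode R a) = a :=
  congr(($(inv_inv (toConv (AlgHom.id R H)))).ofConv a)

theorem ofConv_mul_eq_sum {K : Type*} [CommRing K] [Algebra R K] (f g : WithConv (H →ₐ[R] K))
    {a : H} {ι : Type*} (r : Coalgebra.Repr R a ι) :
    (f * g).ofConv a = ∑ i ∈ r.index, f.ofConv (r.left i) * g.ofConv (r.right i) := by
  simp [AlgHom.convMul_def, ← r.eq]

/-- In the convolution group of algebra maps `H → H ⊗ H`, `Δ` is the product of the two inclusions;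
compare `Δ⁻¹ = Δ ∘ S` with the product of their inverses in reverse order. -/
theorem comul_antipode {a : H} {ι : Type*} (r : Coalgebra.Repr R a ι) :
    comul (antipode R a) =
      ∑ i ∈ r.index, antipode R (r.right i) ⊗ₜ[R] antipode R (r.left i) := by
  let f : WithConv (H →ₐ[R] H ⊗[R] H) := toConv Algebra.TensorProduct.includeLeft
  let g : WithConv (H →ₐ[R] H ⊗[R] H) := toConv Algebra.TensorProduct.includeRight
  have hfg : f * g = toConv (Bialgebra.comulAlgHom R H) := by
    ext b
    simp [ofConv_mul_eq_sum f g (ℛ R b), f, g, (ℛ R b).eq]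
  calc comul (antipode R a) = ((f * g)⁻¹).ofConv a := by rw [hfg]; rfl
    _ = (g⁻¹ * f⁻¹).ofConv a := congr(($(mul_inv_rev f g)).ofConv a)
    _ = ∑ i ∈ r.index, g⁻¹.ofConv (r.left i) * f⁻¹.ofConv (r.right i) := ofConv_mul_eq_sum _ _ r
    _ = ∑ i ∈ r.index, antipode R (r.right i) ⊗ₜ[R] antipode R (r.left i) := by
      refine Finset.sum_congr rfl fun i _ ↦ ?_
      change (1 ⊗ₜ antipode R (r.left i)) * (antipode R (r.right i) ⊗ₜ 1) = _
      simp

end Antipode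

section MultiplicativeMatrix

/-- The set of entries of a matrix, used to span subspaces and generate subalgebras. -/
def matrixEntries {m n α : Type*} (c : Matrix m n α) : Set α :=
  Set.range fun ij : m × n ↦ c ij.1 ij.2

theorem mem_matrixEntries {m n α : Type*} (c : Matrix m n α) (i : m) (j : n) :
    c i j ∈ matrixEntries c :=
  ⟨(i, j), rfl⟩

/-- A square matrix over a coalgebra with `Δ(c i j) = ∑ l, c i l ⊗ c l j` and `ε(c i j) = δ i j`,
the form taken by the matrix coefficients of a finite-dimensional comodule. -/
structure IsMultiplicativeMatrix (R : Type*) {C n : Type*} [CommRing R] [AddCommGroup C]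
    [Module R C] [Coalgebra R C] [Fintype n] [DecidableEq n] (c : Matrix n n C) : Prop where
  comul_apply (i j : n) : comul (R := R) (c i j) = ∑ l, c i l ⊗ₜ[R] c l j
  counit_apply (i j : n) : counit (R := R) (c i j) = (1 : Matrix n n R) i j

theorem mem_span_matrixEntries_of_comul_eq_sum {R C n : Type*} [CommRing R] [AddCommGroup C]
    [Module R C] [Coalgebra R C] [Fintype n] {e : n → C} {c : Matrix n n C} {j : n}
    (h : comul (e j) = ∑ i, e i ⊗ₜ[R] c i j) :
    e j ∈ Submodule.span R (matrixEntries c) := by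
  let r : Coalgebra.Repr R (e j) n := ⟨Finset.univ, e, fun i ↦ c i j, h.symm⟩
  rw [← sum_counit_smul r]
  exact sum_mem fun i _ ↦ Submodule.smul_mem _ _ (Submodule.subset_span (mem_matrixEntries c i j))

variable {k C n : Type*} [Field k] [AddCommGroup C] [Module k C] [Coalgebra k C] [Fintype n]

theorem linearIndependent_tmul_injective {M N : Type*} [AddCommGroup M] [Module k M]
    [AddCommGroup N] [Module k N] {e : n → M} (he : LinearIndependent k e) :
    Function.Injective fun t : n → N ↦ ∑ i, e i ⊗ₜ[k] t i := by
  classical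
  obtain ⟨φ, hφ⟩ := (Finsupp.linearCombination k e).exists_leftInverse_of_injective
    (linearIndependent_iff_ker.1 he)
  have hφe (i : n) : φ (e i) = Finsupp.single i 1 := by
    simpa using LinearMap.congr_fun hφ (Finsupp.single i 1)
  refine fun t t' h ↦ funext fun l ↦ ?_
  simpa [hφe, Finsupp.single_apply, ite_smul] using
    congr(TensorProduct.lid k N ((Finsupp.lapply l ∘ₗ φ).rTensor N $h))

theorem isMultiplicativeMatrix_of_linearIndependent [DecidableEq n] {e : n → C}
    (he : LinearIndependent k e) {c : Matrix n n C}
    (h : ∀ j, comul (e j) = ∑ i, e i ⊗ₜ[k] c i j) : IsMultiplicativeMatrix k c where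
  comul_apply i j := by
    refine congrFun (linearIndependent_tmul_injective he (a₁ := fun i ↦ comul (c i j))
      (a₂ := fun i ↦ ∑ l, c i l ⊗ₜ[k] c l j) ?_) i
    have hcoassoc := coassoc_apply (R := k) (e j)
    simp only [h, map_sum, LinearMap.rTensor_tmul, LinearMap.lTensor_tmul, sum_tmul,
      assoc_tmul] at hcoassoc
    rw [Finset.sum_comm] at hcoassoc
    simpa only [tmul_sum] using hcoassoc.symm
  counit_apply i j := by
    refine congrFun (he.fintypeLinearCombination_injective (a₁ := fun i ↦ counit (c i j))
      (a₂ := fun i ↦ (1 : Matrix n n k) i j) ?_) i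
    let r : Coalgebra.Repr k (e j) n := ⟨Finset.univ, e, fun i ↦ c i j, (h j).symm⟩
    simpa [Fintype.linearCombination_apply, Matrix.one_apply, r] using sum_counit_right_smul r

theorem exists_isMultiplicativeMatrix_le_span {V : Submodule k C} [FiniteDimensional k V]
    (hV : ∀ v ∈ V, comul v ∈ LinearMap.range (V.subtype.rTensor C)) :
    ∃ (n : ℕ) (c : Matrix (Fin n) (Fin n) C), IsMultiplicativeMatrix k c ∧
      V ≤ Submodule.span k (matrixEntries c) := by
  let b := Module.finBasis k V
  let e i : C := b i
  have he : LinearIndependent k e := b.linearIndependent.map' V.subtype V.ker_subtype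
  have hcomul j : ∃ t : _ → C, comul (e j) = ∑ i, e i ⊗ₜ[k] t i := by
    obtain ⟨t, ht⟩ := hV (b j) (b j).2
    obtain ⟨s, rfl⟩ := TensorProduct.eq_repr_basis_left b t
    refine ⟨s, ht.symm.trans ?_⟩
    rw [Finsupp.sum_fintype _ _ (by simp), map_sum]
    rfl
  choose c hc using hcomul
  refine ⟨_, fun i j ↦ c j i, isMultiplicativeMatrix_of_linearIndependent he hc, fun v hv ↦ ?_⟩
  have hv_sum : ∑ j, b.repr ⟨v, hv⟩ j • e j = v := by
    simpa only [map_sum, map_smul] using! congr(V.subtype $(b.sum_repr ⟨v, hv⟩))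
  rw [← hv_sum]
  exact sum_mem fun j _ ↦ Submodule.smul_mem _ _ (mem_span_matrixEntries_of_comul_eq_sum (hc j))

end MultiplicativeMatrix

section HopfSubalgebra

variable {R H : Type*} [CommRing R] [CommRing H] [HopfAlgebra R H]

/-- `A` is a Hopf subalgebra of `H`: `Δ(A)` lies in the image of `A ⊗ A` in `H ⊗ H`, and `S(A) ⊆ A`.
The image is used because `A ⊗ A → H ⊗ H` need not be injective over a general base ring. -/
structure IsHopfSubalgebra (A : Subalgebra R H) : Prop where
  comul_mem : ∀ a ∈ A, comul a ∈ (Algebra.TensorProduct.map A.val A.val).range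
  antipode_mem : ∀ a ∈ A, antipode R a ∈ A

theorem isHopfSubalgebra_adjoin {s : Set H}
    (hcomul : ∀ a ∈ s, comul a ∈ (Algebra.TensorProduct.map (Algebra.adjoin R s).val
      (Algebra.adjoin R s).val).range)
    (hantipode : ∀ a ∈ s, antipode R a ∈ Algebra.adjoin R s) :
    IsHopfSubalgebra (Algebra.adjoin R s) where
  comul_mem := Algebra.adjoin_le
    (S := (Algebra.TensorProduct.map _ _).range.comap (Bialgebra.comulAlgHom R H)) hcomul
  antipode_mem := Algebra.adjoin_le
    (S := (Algebra.adjoin R s).comap (antipodeAlgHom R H)) hantipode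

theorem tmul_mem_range_map_val {A : Subalgebra R H} {a b : H} (ha : a ∈ A) (hb : b ∈ A) :
    a ⊗ₜ[R] b ∈ (Algebra.TensorProduct.map A.val A.val).range :=
  ⟨⟨a, ha⟩ ⊗ₜ ⟨b, hb⟩, rfl⟩

variable {n : Type*} [Fintype n] [DecidableEq n]

theorem IsMultiplicativeMatrix.isHopfSubalgebra_adjoin_union_antipode {c : Matrix n n H}
    (hc : IsMultiplicativeMatrix R c) :
    IsHopfSubalgebra (Algebra.adjoin R (matrixEntries c ∪ antipode R '' matrixEntries c)) := by
  set s := matrixEntries c ∪ antipode R '' matrixEntries c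
  have hmem i j : c i j ∈ Algebra.adjoin R s :=
    Algebra.subset_adjoin (.inl (mem_matrixEntries c i j))
  have hmem_antipode i j : antipode R (c i j) ∈ Algebra.adjoin R s :=
    Algebra.subset_adjoin (.inr ⟨_, mem_matrixEntries c i j, rfl⟩)
  refine isHopfSubalgebra_adjoin ?_ ?_
  · rintro _ (⟨⟨i, j⟩, rfl⟩ | ⟨_, ⟨⟨i, j⟩, rfl⟩, rfl⟩)
    · rw [hc.comul_apply]
      exact sum_mem fun l _ ↦ tmul_mem_range_map_val (hmem i l) (hmem l j)
    · let r : Coalgebra.Repr R (c i j) n :=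
        ⟨Finset.univ, fun l ↦ c i l, fun l ↦ c l j, (hc.comul_apply i j).symm⟩
      rw [comul_antipode r]
      exact sum_mem fun l _ ↦ tmul_mem_range_map_val (hmem_antipode l j) (hmem_antipode i l)
  · rintro _ (⟨⟨i, j⟩, rfl⟩ | ⟨_, ⟨⟨i, j⟩, rfl⟩, rfl⟩)
    · exact hmem_antipode i j
    · simpa only [antipode_antipode] using hmem i j

theorem exists_fg_isHopfSubalgebra_mem {k H : Type*} [Field k] [CommRing H] [HopfAlgebra k H]
    (x : H) : ∃ A : Subalgebra k H, A.FG ∧ IsHopfSubalgebra A ∧ x ∈ A := by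
  obtain ⟨n, c, hc, hx⟩ := exists_isMultiplicativeMatrix_le_span
    fun y ↦ comul_mem_range_rTensor_generatedRightCoideal (R := k) (x := x) (y := y)
  refine ⟨_, ?_, hc.isHopfSubalgebra_adjoin_union_antipode, ?_⟩
  · exact Subalgebra.fg_def.2 ⟨_, (Set.finite_range _).union ((Set.finite_range _).image _), rfl⟩
  · exact Algebra.span_le_adjoin k _ (Submodule.span_mono Set.subset_union_left
      (hx (mem_generatedRightCoideal x)))

end HopfSubalgebra

section HopfAlgebraOfSubalgebra

variable {k H : Type*} [Field k] [CommRing H]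

theorem tensorProduct_map_val_injective [Algebra k H] {A : Subalgebra k H} {B C : Type*}
    [CommRing B] [Algebra k B] [CommRing C] [Algebra k C] {f : B →ₐ[k] C}
    (hf : Function.Injective f) :
    Function.Injective (Algebra.TensorProduct.map A.val f) :=
  TensorProduct.map_injective_of_flat_flat A.val.toLinearMap f.toLinearMap Subtype.val_injective hf

theorem map_val_comp_assoc [Algebra k H] (A : Subalgebra k H) :
    (Algebra.TensorProduct.map A.val (Algebra.TensorProduct.map A.val A.val)).comp
        (Algebra.TensorProduct.assoc k k k A A A).toAlgHom =
      (Algebra.TensorProduct.assoc k k k H H H).toAlgHom.comp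
        (Algebra.TensorProduct.map (Algebra.TensorProduct.map A.val A.val) A.val) := by
  ext <;> rfl

namespace IsHopfSubalgebra

variable [HopfAlgebra k H] {A : Subalgebra k H}

/-- The comultiplication `A → A ⊗ A` of a Hopf subalgebra, obtained by inverting the injection
`A ⊗ A → H ⊗ H` on its range. -/
noncomputable def comulAlgHom (hA : IsHopfSubalgebra A) : A →ₐ[k] A ⊗[k] A :=
  (AlgEquiv.ofInjective (Algebra.TensorProduct.map A.val A.val)
    (tensorProduct_map_val_injective Subtype.val_injective)).symm.toAlgHom.comp
    (((Bialgebra.comulAlgHom k H).comp A.val).codRestrict _ fun a ↦ hA.comul_mem a a.2)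

theorem map_val_comp_comulAlgHom (hA : IsHopfSubalgebra A) :
    (Algebra.TensorProduct.map A.val A.val).comp hA.comulAlgHom =
      (Bialgebra.comulAlgHom k H).comp A.val := by
  ext a
  exact congrArg Subtype.val (AlgEquiv.apply_symm_apply (AlgEquiv.ofInjective
    (Algebra.TensorProduct.map A.val A.val) (tensorProduct_map_val_injective Subtype.val_injective))
      ⟨comul (a : H), hA.comul_mem a a.2⟩)

theorem map_val_comulAlgHom (hA : IsHopfSubalgebra A) (a : A) :
    Algebra.TensorProduct.map A.val A.val (hA.comulAlgHom a) = comul (a : H) :=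
  congr($(hA.map_val_comp_comulAlgHom) a)

theorem comulAlgHom_coassoc (hA : IsHopfSubalgebra A) :
    (Algebra.TensorProduct.assoc k k k A A A).toAlgHom.comp
      ((Algebra.TensorProduct.map hA.comulAlgHom (.id k A)).comp hA.comulAlgHom) =
    (Algebra.TensorProduct.map (.id k A) hA.comulAlgHom).comp hA.comulAlgHom := by
  let ι := Algebra.TensorProduct.map A.val (Algebra.TensorProduct.map A.val A.val)
  have hι_comul_id : (ι.comp (Algebra.TensorProduct.assoc k k k A A A).toAlgHom).comp
      (Algebra.TensorProduct.map hA.comulAlgHom (.id k A)) =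
    ((Algebra.TensorProduct.assoc k k k H H H).toAlgHom.comp
      (Algebra.TensorProduct.map (Bialgebra.comulAlgHom k H) (.id k H))).comp
        (Algebra.TensorProduct.map A.val A.val) := by
    rw [map_val_comp_assoc, AlgHom.comp_assoc, AlgHom.comp_assoc, ← Algebra.TensorProduct.map_comp,
      ← Algebra.TensorProduct.map_comp, map_val_comp_comulAlgHom]
    rfl
  have hι_id_comul : ι.comp (Algebra.TensorProduct.map (.id k A) hA.comulAlgHom) =
      (Algebra.TensorProduct.map (.id k H) (Bialgebra.comulAlgHom k H)).comp
        (Algebra.TensorProduct.map A.val A.val) := by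
    simp only [ι, ← Algebra.TensorProduct.map_comp, map_val_comp_comulAlgHom]
    rfl
  ext a
  apply tensorProduct_map_val_injective (f := Algebra.TensorProduct.map A.val A.val)
    (tensorProduct_map_val_injective Subtype.val_injective)
  have hleft := congr($hι_comul_id (hA.comulAlgHom a))
  have hright := congr($hι_id_comul (hA.comulAlgHom a))
  simp only [AlgHom.comp_apply, map_val_comulAlgHom] at hleft hright
  exact hleft.trans ((coassoc_apply (R := k) (a : H)).trans hright.symm)

theorem map_counit_id_comp_comulAlgHom (hA : IsHopfSubalgebra A) :
    (Algebra.TensorProduct.map ((Bialgebra.counitAlgHom k H).comp A.val) (.id k A)).comp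
      hA.comulAlgHom = (Algebra.TensorProduct.lid k A).symm := by
  have hnat : A.val.comp ((Algebra.TensorProduct.lid k A).toAlgHom.comp
        (Algebra.TensorProduct.map ((Bialgebra.counitAlgHom k H).comp A.val) (.id k A))) =
      ((Algebra.TensorProduct.lid k H).toAlgHom.comp (Algebra.TensorProduct.map
        (Bialgebra.counitAlgHom k H) (.id k H))).comp (Algebra.TensorProduct.map A.val A.val) := by
    ext <;> simp
  ext a
  apply (Algebra.TensorProduct.lid k A).injective
  apply Subtype.val_injective
  have h := congr($hnat (hA.comulAlgHom a))
  simp only [AlgHom.comp_apply, map_val_comulAlgHom] at h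
  refine h.trans ?_
  refine congr(Algebra.TensorProduct.lid k H $(rTensor_counit_comul (R := k) (a : H))).trans ?_
  simp

theorem map_id_counit_comp_comulAlgHom (hA : IsHopfSubalgebra A) :
    (Algebra.TensorProduct.map (.id k A) ((Bialgebra.counitAlgHom k H).comp A.val)).comp
      hA.comulAlgHom = (Algebra.TensorProduct.rid k k A).symm := by
  have hnat : A.val.comp ((Algebra.TensorProduct.rid k k A).toAlgHom.comp
        (Algebra.TensorProduct.map (.id k A) ((Bialgebra.counitAlgHom k H).comp A.val))) =
      ((Algebra.TensorProduct.rid k k H).toAlgHom.comp (Algebra.TensorProduct.map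
        (.id k H) (Bialgebra.counitAlgHom k H))).comp (Algebra.TensorProduct.map A.val A.val) := by
    ext <;> simp
  ext a
  apply (Algebra.TensorProduct.rid k k A).injective
  apply Subtype.val_injective
  have h := congr($hnat (hA.comulAlgHom a))
  simp only [AlgHom.comp_apply, map_val_comulAlgHom] at h
  refine h.trans ?_
  refine congr(Algebra.TensorProduct.rid k k H $(lTensor_counit_comul (R := k) (a : H))).trans ?_
  simp

/-- The bialgebra structure that a Hopf subalgebra inherits from `H`. -/
noncomputable abbrev bialgebra (hA : IsHopfSubalgebra A) : Bialgebra k A :=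
  .ofAlgHom hA.comulAlgHom ((Bialgebra.counitAlgHom k H).comp A.val) hA.comulAlgHom_coassoc
    hA.map_counit_id_comp_comulAlgHom hA.map_id_counit_comp_comulAlgHom

/-- The antipode of a Hopf subalgebra, restricted from `H`. -/
noncomputable def antipodeAlgHom (hA : IsHopfSubalgebra A) : A →ₐ[k] A :=
  ((HopfAlgebra.antipodeAlgHom k H).comp A.val).codRestrict A fun a ↦ hA.antipode_mem a a.2

theorem coe_lift_comulAlgHom (hA : IsHopfSubalgebra A) {f g : A →ₐ[k] A} {F G : H →ₐ[k] H}
    (hf : A.val.comp f = F.comp A.val) (hg : A.val.comp g = G.comp A.val) (a : A) :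
    (Algebra.TensorProduct.lift f g (fun _ _ ↦ Commute.all _ _) (hA.comulAlgHom a) : H) =
      Algebra.TensorProduct.lift F G (fun _ _ ↦ Commute.all _ _) (comul (a : H)) := by
  have hnat : A.val.comp (Algebra.TensorProduct.lift f g fun _ _ ↦ Commute.all _ _) =
      (Algebra.TensorProduct.lift F G fun _ _ ↦ Commute.all _ _).comp
        (Algebra.TensorProduct.map A.val A.val) := by
    refine Algebra.TensorProduct.ext' fun x y ↦ ?_
    have hx : (f x : H) = F x := congr($hf x)
    have hy : (g y : H) = G y := congr($hg y)
    simp [hx, hy]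
  rw [← hA.map_val_comulAlgHom]
  exact congr($hnat (hA.comulAlgHom a))

theorem coe_lift_antipode_id_comulAlgHom (hA : IsHopfSubalgebra A) (a : A) :
    (Algebra.TensorProduct.lift hA.antipodeAlgHom (.id k A) (fun _ _ ↦ Commute.all _ _)
      (hA.comulAlgHom a) : H) = algebraMap k H (counit (a : H)) := by
  rw [hA.coe_lift_comulAlgHom (F := HopfAlgebra.antipodeAlgHom k H) (G := .id k H) rfl rfl,
    ← (ℛ k (a : H)).eq]
  simpa using! sum_antipode_mul_eq_algebraMap_counit (ℛ k (a : H))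

theorem coe_lift_id_antipode_comulAlgHom (hA : IsHopfSubalgebra A) (a : A) :
    (Algebra.TensorProduct.lift (.id k A) hA.antipodeAlgHom (fun _ _ ↦ Commute.all _ _)
      (hA.comulAlgHom a) : H) = algebraMap k H (counit (a : H)) := by
  rw [hA.coe_lift_comulAlgHom (F := .id k H) (G := HopfAlgebra.antipodeAlgHom k H) rfl rfl,
    ← (ℛ k (a : H)).eq]
  simpa using! sum_mul_antipode_eq_algebraMap_counit (ℛ k (a : H))

/-- The Hopf algebra structure that a Hopf subalgebra inherits from `H`. -/
noncomputable abbrev hopfAlgebra (hA : IsHopfSubalgebra A) : HopfAlgebra k A :=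
  letI := hA.bialgebra
  .ofAlgHom hA.antipodeAlgHom
    (AlgHom.ext fun a ↦ Subtype.ext (hA.coe_lift_antipode_id_comulAlgHom a))
    (AlgHom.ext fun a ↦ Subtype.ext (hA.coe_lift_id_antipode_comulAlgHom a))

end IsHopfSubalgebra

end HopfAlgebraOfSubalgebra

theorem commutative_hopf_algebra_reduced_of_charZero
    (k : Type u) [Field k] [CharZero k] (H : Type v) [CommRing H] [HopfAlgebra k H] :
    IsReduced H := by
  refine ⟨fun x hx ↦ ?_⟩
  obtain ⟨A, hfg, hA, hxA⟩ := exists_fg_isHopfSubalgebra_mem (k := k) x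
  let := hA.hopfAlgebra
  have : Algebra.FiniteType k A := A.fg_iff_finiteType.1 hfg
  have : Module.Projective A Ω[A⁄k] := projective_kaehlerDifferential_of_hopfAlgebra
  have : IsReduced A := isReduced_of_projective_kaehlerDifferential k A
  have hxA' : IsNilpotent (⟨x, hxA⟩ : A) :=
    (IsNilpotent.map_iff (f := A.val) Subtype.val_injective).1 hx
  exact congrArg Subtype.val hxA'.eq_zero
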